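/- arXiv:1807.04618 — 2 statements merged into one kernel-verified Lean document; each statement's English description precedes it below -/
import Mathlib

section
/- Every WDT-optimal schedule has no idle time slots during the discovery: if L is WDT-optimal, then for every time slot t ∈ {0, …, max(B)·|C| − 1} there exists a channel c ∈ C with (c,t) ∈ L. -/
open scoped Classical

/-- A listening schedule over channel set `C`: a set of (channel, time-slot) pairs
such that all scanned channels belong to `C` and at most one channel is scanned
per time slot. -/
def IsSchedule (C : Finset ℕ) (L : Set (ℕ × ℕ)) : Prop :=
  (∀ p ∈ L, p.1 ∈ C) ∧ ∀ c c' t : ℕ, (c, t) ∈ L → (c', t) ∈ L → c = c'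

/-- Configuration `(c, b, δ)` is discovered at time slot `t` by the schedule `L`. -/
def DiscoveredAt (L : Set (ℕ × ℕ)) (c b δ t : ℕ) : Prop :=
  (c, t) ∈ L ∧ t % b = δ

/-- The discovery time `T_κ(L)` of configuration `κ = (c, b, δ)`: the least time slot
at which it is discovered (junk value `0` if it is never discovered). -/
noncomputable def discTime (L : Set (ℕ × ℕ)) (c b δ : ℕ) : ℕ :=
  sInf {t | DiscoveredAt L c b δ t}

/-- A schedule is complete if every configuration in `K_BC` is discovered at some slot. -/
def Complete (C B : Finset ℕ) (L : Set (ℕ × ℕ)) : Prop :=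
  ∀ c ∈ C, ∀ b ∈ B, ∀ δ < b, ∃ t, DiscoveredAt L c b δ t

/-- The set of all configurations `K_BC`, as a finite set of triples `(c, b, δ)`. -/
def KBC (C B : Finset ℕ) : Finset (ℕ × ℕ × ℕ) :=
  (C ×ˢ B ×ˢ Finset.range (B.sup id)).filter fun κ => κ.2.2 < κ.2.1

/-- The weight `P_κ = 1/(b·|B|·|C|)` of a configuration with beacon period `b`. -/
noncomputable def weight (C B : Finset ℕ) (b : ℕ) : ℝ :=
  (1 : ℝ) / ((b : ℝ) * (B.card : ℝ) * (C.card : ℝ))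

/-- Total weight of configurations discovered by `L` at some slot `≤ t` (the NDoT curve). -/
noncomputable def discSum (C B : Finset ℕ) (L : Set (ℕ × ℕ)) (t : ℕ) : ℝ :=
  ∑ κ ∈ (KBC C B).filter (fun κ => ∃ t' ≤ t, DiscoveredAt L κ.1 κ.2.1 κ.2.2 t'),
    weight C B κ.2.1

/-- The mean discovery time `MDT(L) = Σ_{κ ∈ K_BC} P_κ · T_κ(L)`. -/
noncomputable def MDT (C B : Finset ℕ) (L : Set (ℕ × ℕ)) : ℝ :=
  ∑ κ ∈ KBC C B, weight C B κ.2.1 * (discTime L κ.1 κ.2.1 κ.2.2 : ℝ)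

/-- A schedule is recursive if it is complete and, for every `b ∈ B`, every
configuration with beacon period `b` has discovery time at most `b·|C| - 1`. -/
def Recursive (C B : Finset ℕ) (L : Set (ℕ × ℕ)) : Prop :=
  Complete C B L ∧
  ∀ c ∈ C, ∀ b ∈ B, ∀ δ < b, discTime L c b δ ≤ b * C.card - 1

/-- `D(c,t)`: the expected number of new discoveries when scanning channel `c` at slot `t`,
i.e. the sum of weights of configurations `(c, b, t mod b)`, `b ∈ B`, not yet
discovered by `L` before slot `t`. -/
noncomputable def gain (C B : Finset ℕ) (L : Set (ℕ × ℕ)) (c t : ℕ) : ℝ :=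
  ∑ b ∈ B.filter (fun b => ¬ ∃ t' < t, DiscoveredAt L c b (t % b) t'),
    weight C B b

/-- A schedule is greedy if, whenever some channel has positive expected gain at slot `t`,
it scans a channel maximizing the expected gain at slot `t`. -/
def Greedy (C B : Finset ℕ) (L : Set (ℕ × ℕ)) : Prop :=
  IsSchedule C L ∧
  ∀ t : ℕ, (∃ c ∈ C, 0 < gain C B L c t) →
    ∃ c ∈ C, (c, t) ∈ L ∧ ∀ c' ∈ C, gain C B L c' t ≤ gain C B L c t

/-!
A slot scans at most one channel and has a single residue modulo `b`, so it discovers at most one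
of the `b * |C|` configurations of beacon period `b`. If these are all discovered within at most
`b * |C|` slots, then no such slot can be wasted. The theorem is the case `b = max B`.
-/

theorem discoveredAt_discTime {L : Set (ℕ × ℕ)} {c b δ : ℕ} (h : ∃ t, DiscoveredAt L c b δ t) :
    DiscoveredAt L c b δ (discTime L c b δ) :=
  Nat.sInf_mem h

namespace IsSchedule

variable {C S : Finset ℕ} {L : Set (ℕ × ℕ)} {b : ℕ}

theorem subsingleton_discoveredAt (hL : IsSchedule C L) (b t : ℕ) :
    {κ : ℕ × ℕ | DiscoveredAt L κ.1 b κ.2 t}.Subsingleton := by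
  rintro ⟨c, δ⟩ ⟨hc, hδ⟩ ⟨c', δ'⟩ ⟨hc', hδ'⟩
  exact Prod.ext (hL.2 c c' t hc hc') (hδ.symm.trans hδ')

theorem mul_card_le_card_scanned (hL : IsSchedule C L)
    (hdisc : ∀ c ∈ C, ∀ δ < b, ∃ t ∈ S, DiscoveredAt L c b δ t) :
    b * C.card ≤ (S.filter fun t => ∃ c ∈ C, (c, t) ∈ L).card := by
  rw [mul_comm, ← Finset.card_range b, ← Finset.card_product]
  refine Finset.card_le_card_of_forall_subsingleton
    (fun κ t => DiscoveredAt L κ.1 b κ.2 t) ?_ ?_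
  · rintro ⟨c, δ⟩ hκ
    obtain ⟨hc, hδ⟩ := Finset.mem_product.mp hκ
    obtain ⟨t, htS, ht⟩ := hdisc c hc δ (Finset.mem_range.mp hδ)
    exact ⟨t, Finset.mem_filter.mpr ⟨htS, c, hc, ht.1⟩, ht⟩
  · exact fun t _ => (hL.subsingleton_discoveredAt b t).anti fun _ hκ => hκ.2

end IsSchedule

theorem stmt2_general {C S : Finset ℕ} {L : Set (ℕ × ℕ)} {b : ℕ} (hL : IsSchedule C L)
    (hS : S.card ≤ b * C.card) (hdisc : ∀ c ∈ C, ∀ δ < b, ∃ t ∈ S, DiscoveredAt L c b δ t) :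
    ∀ t ∈ S, ∃ c ∈ C, (c, t) ∈ L :=
  Finset.card_filter_eq_iff.mp <|
    (Finset.card_filter_le _ _).antisymm (hS.trans (hL.mul_card_le_card_scanned hdisc))

/-- a WDT-optimal schedule has no idle time slots: every slot
`t ∈ {0, …, max(B)·|C| − 1}` scans some channel. -/
theorem stmt2 (C B : Finset ℕ) (hC : C.Nonempty) (hB : B.Nonempty)
    (hBpos : ∀ b ∈ B, 0 < b)
    (L : Set (ℕ × ℕ)) (hL : IsSchedule C L) (hcomp : Complete C B L)
    (hwdt : ∀ c ∈ C, ∀ b ∈ B, ∀ δ < b,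
      discTime L c b δ ≤ B.max' hB * C.card - 1) :
    ∀ t ≤ B.max' hB * C.card - 1, ∃ c ∈ C, (c, t) ∈ L := by
  have hpos : 0 < B.max' hB * C.card := Nat.mul_pos (hBpos _ (B.max'_mem hB)) hC.card_pos
  have hcard : (Finset.Iic (B.max' hB * C.card - 1)).card = B.max' hB * C.card := by
    rw [Nat.card_Iic, Nat.sub_add_cancel hpos]
  simpa only [Finset.mem_Iic] using stmt2_general hL hcard.le fun c hc δ hδ =>
    ⟨discTime L c (B.max' hB) δ, Finset.mem_Iic.mpr (hwdt c hc _ (B.max'_mem hB) δ hδ),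
      discoveredAt_discTime (hcomp c hc _ (B.max'_mem hB) δ hδ)⟩
end

section
/- If B ∈ 𝔽₃, then a listening schedule is greedy if and only if it is recursive. Consequently, for B ∈ 𝔽₃ every greedy schedule is complete, WDT-optimal, MDT-optimal, and NDoT-optimal. -/
open scoped Classical

/-! Call slot `t` fresh for a period `b` if the scan at `t` discovers a new configuration of
period `b`. Each slot discovers at most one configuration of period `b`, and there are `b * |C|` of
them, so all of them are discovered before slot `b * |C|` exactly when every slot before `b * |C|`
is fresh for `b`; this characterises recursive schedules. Such a schedule has discovered
`min n (b * |C|)` configurations of period `b` before slot `n`, the largest possible number,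
simultaneously for all `b` and `n`. This gives NDoT-optimality, and MDT-optimality by summation
over `n`.

For a greedy schedule, freshness is shown by induction on the slot `t`. A period `b ≤ t / |C|` is
exhausted by the induction hypothesis. Let `b₀` be the least of the others. Fewer than `|C|` earlier
slots are congruent to `t` modulo `b₀`, so some channel was scanned at none of them; as `b₀` divides
every remaining period, this channel would make `t` fresh for all of them at once. A channel of
maximal gain must then do so too. -/

section FreshSlots

variable {C : Finset ℕ} {L : Set (ℕ × ℕ)} {b n t : ℕ}

/-- Slot `t` is fresh for the period `b` if the channel scanned at `t` is scanned at no earlier slot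
congruent to `t` modulo `b`, that is, if the scan discovers a new configuration of period `b`. -/
def FreshSlot (L : Set (ℕ × ℕ)) (b t : ℕ) : Prop :=
  ∃ c, (c, t) ∈ L ∧ ¬ ∃ t' < t, DiscoveredAt L c b (t % b) t'

/-- The configurations of period `b` discovered before slot `n`, with `(c, b, δ)` encoded as the
pair `(c, δ)`. -/
noncomputable def discoveredBefore (C : Finset ℕ) (L : Set (ℕ × ℕ)) (b n : ℕ) : Finset (ℕ × ℕ) :=
  {p ∈ C ×ˢ Finset.range b | ∃ t < n, DiscoveredAt L p.1 b p.2 t}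

lemma mem_discoveredBefore {p : ℕ × ℕ} :
    p ∈ discoveredBefore C L b n ↔
      (p.1 ∈ C ∧ p.2 < b) ∧ ∃ t < n, DiscoveredAt L p.1 b p.2 t := by
  simp only [discoveredBefore, Finset.mem_filter, Finset.mem_product, Finset.mem_range]

lemma IsSchedule.freshSlot_iff (hL : IsSchedule C L) {c : ℕ} (hc : (c, t) ∈ L) :
    FreshSlot L b t ↔ ¬ ∃ t' < t, DiscoveredAt L c b (t % b) t' := by
  refine ⟨?_, fun h => ⟨c, hc, h⟩⟩
  rintro ⟨d, hd, hfresh⟩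
  rwa [hL.2 c d t hc hd]

lemma discoveredBefore_succ_of_freshSlot (hL : IsSchedule C L) (hb : 0 < b)
    (h : FreshSlot L b n) :
    ∃ p ∉ discoveredBefore C L b n,
      discoveredBefore C L b (n + 1) = insert p (discoveredBefore C L b n) := by
  obtain ⟨c, hc, hfresh⟩ := h
  refine ⟨(c, n % b), fun hmem => hfresh (mem_discoveredBefore.1 hmem).2, ?_⟩
  ext ⟨d, δ⟩
  simp only [Finset.mem_insert, mem_discoveredBefore, Nat.exists_lt_succ_right, Prod.mk.injEq]
  constructor
  · rintro ⟨hp, hbefore | hnow⟩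
    · exact .inr ⟨hp, hbefore⟩
    · exact .inl ⟨hL.2 d c n hnow.1 hc, hnow.2.symm⟩
  · rintro (⟨rfl, rfl⟩ | ⟨hp, hbefore⟩)
    · exact ⟨⟨hL.1 _ hc, Nat.mod_lt n hb⟩, .inr ⟨hc, rfl⟩⟩
    · exact ⟨hp, .inl hbefore⟩

lemma discoveredBefore_succ_of_not_freshSlot (h : ¬ FreshSlot L b n) :
    discoveredBefore C L b (n + 1) = discoveredBefore C L b n := by
  ext ⟨d, δ⟩
  simp only [mem_discoveredBefore, Nat.exists_lt_succ_right, and_congr_right_iff,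
    or_iff_left_iff_imp]
  rintro - ⟨hd, rfl⟩
  by_contra hnew
  exact h ⟨d, hd, hnew⟩

lemma card_discoveredBefore (hL : IsSchedule C L) (hb : 0 < b) (n : ℕ) :
    (discoveredBefore C L b n).card = Nat.count (FreshSlot L b) n := by
  induction n with
  | zero => simp [discoveredBefore]
  | succ n ih =>
    by_cases h : FreshSlot L b n
    · obtain ⟨p, hp, hinsert⟩ := discoveredBefore_succ_of_freshSlot hL hb h
      rw [hinsert, Finset.card_insert_of_notMem hp, ih, Nat.count_succ_eq_succ_count_iff.2 h]
    · rw [discoveredBefore_succ_of_not_freshSlot h, ih, Nat.count_succ_eq_count_iff.2 h]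

lemma card_discoveredBefore_le (hL : IsSchedule C L) (hb : 0 < b) (n : ℕ) :
    (discoveredBefore C L b n).card ≤ min n (b * C.card) := by
  refine le_min ?_ ?_
  · exact (card_discoveredBefore hL hb n).trans_le (Nat.count_le _)
  · calc (discoveredBefore C L b n).card
        ≤ (C ×ˢ Finset.range b).card := Finset.card_filter_le _ _
      _ = b * C.card := by rw [Finset.card_product, Finset.card_range, mul_comm]

lemma min_le_card_discoveredBefore (hL : IsSchedule C L) (hb : 0 < b)
    (h : ∀ t < b * C.card, FreshSlot L b t) (n : ℕ) :
    min n (b * C.card) ≤ (discoveredBefore C L b n).card := by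
  calc min n (b * C.card) = Nat.count (FreshSlot L b) (min n (b * C.card)) :=
        (Nat.count_iff_forall.2 fun t ht => h t (ht.trans_le (min_le_right _ _))).symm
    _ ≤ Nat.count (FreshSlot L b) n := Nat.count_monotone _ (min_le_left _ _)
    _ = (discoveredBefore C L b n).card := (card_discoveredBefore hL hb n).symm

lemma forall_discovered_iff_forall_freshSlot (hL : IsSchedule C L) (hb : 0 < b) :
    (∀ c ∈ C, ∀ δ < b, ∃ t < b * C.card, DiscoveredAt L c b δ t) ↔
      ∀ t < b * C.card, FreshSlot L b t := by
  calc (∀ c ∈ C, ∀ δ < b, ∃ t < b * C.card, DiscoveredAt L c b δ t)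
      ↔ discoveredBefore C L b (b * C.card) = C ×ˢ Finset.range b := by
        simp only [discoveredBefore, Finset.filter_eq_self, Finset.mem_product, Finset.mem_range,
          Prod.forall, and_imp]
        exact ⟨fun h c δ hc hδ => h c hc δ hδ, fun h c hc δ hδ => h c δ hc hδ⟩
    _ ↔ (discoveredBefore C L b (b * C.card)).card = b * C.card := by
        rw [discoveredBefore, Finset.filter_eq_self, ← Finset.card_filter_eq_iff,
          Finset.card_product, Finset.card_range, mul_comm]
    _ ↔ ∀ t < b * C.card, FreshSlot L b t := by
        rw [card_discoveredBefore hL hb, Nat.count_iff_forall]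

lemma exists_channel_not_discovered (hL : IsSchedule C L) (ht : t < b * C.card) :
    ∃ c ∈ C, ¬ ∃ t' < t, DiscoveredAt L c b (t % b) t' := by
  have hb : 0 < b := Nat.pos_of_lt_mul_right ht
  by_contra! h
  have hcard : C.card ≤ {t' ∈ Finset.range t | t' ≡ t [MOD b]}.card := by
    refine Finset.card_le_card_of_forall_subsingleton (fun c t' => (c, t') ∈ L) ?_ ?_
    · intro c hc
      obtain ⟨t', hlt, hmem, hmod⟩ := h c hc
      exact ⟨t', Finset.mem_filter.2 ⟨Finset.mem_range.2 hlt, hmod⟩, hmem⟩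
    · intro t' _ c hc d hd
      exact hL.2 c d t' hc.2 hd.2
  rw [← Nat.count_eq_card_filter_range, Nat.count_modEq_card t hb, if_neg (lt_irrefl _),
    add_zero] at hcard
  exact hcard.not_gt (Nat.div_lt_of_lt_mul ht)

end FreshSlots

section Recursive

variable {C B : Finset ℕ} {L : Set (ℕ × ℕ)}

/-- A schedule is irredundant if every slot before `b * |C|` is fresh for `b`, for every `b ∈ B`. -/
def Irredundant (C B : Finset ℕ) (L : Set (ℕ × ℕ)) : Prop :=
  ∀ b ∈ B, ∀ t < b * C.card, FreshSlot L b t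

lemma exists_le_discoveredAt_iff {c b δ : ℕ} (h : ∃ t, DiscoveredAt L c b δ t) (t : ℕ) :
    (∃ t' ≤ t, DiscoveredAt L c b δ t') ↔ discTime L c b δ ≤ t :=
  ⟨fun ⟨_, hle, hdisc⟩ => (Nat.sInf_le hdisc).trans hle, fun hle => ⟨_, hle, Nat.sInf_mem h⟩⟩

lemma recursive_iff_forall_discovered :
    Recursive C B L ↔
      ∀ b ∈ B, ∀ c ∈ C, ∀ δ < b, ∃ t < b * C.card, DiscoveredAt L c b δ t := by
  have hle_iff {c b δ t : ℕ} (hc : c ∈ C) (hδ : δ < b) :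
      t ≤ b * C.card - 1 ↔ t < b * C.card :=
    Nat.le_sub_one_iff_lt (Nat.mul_pos (Nat.zero_lt_of_lt hδ) (Finset.card_pos.2 ⟨c, hc⟩))
  constructor
  · rintro ⟨hcomplete, htime⟩ b hb c hc δ hδ
    simpa only [hle_iff hc hδ] using
      (exists_le_discoveredAt_iff (hcomplete c hc b hb δ hδ) _).2 (htime c hc b hb δ hδ)
  · intro h
    refine ⟨fun c hc b hb δ hδ => ?_, fun c hc b hb δ hδ => ?_⟩ <;>
      obtain ⟨t, hlt, hdisc⟩ := h b hb c hc δ hδ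
    · exact ⟨t, hdisc⟩
    · exact (exists_le_discoveredAt_iff ⟨t, hdisc⟩ _).1 ⟨t, (hle_iff hc hδ).2 hlt, hdisc⟩

lemma recursive_iff_irredundant (hBpos : ∀ b ∈ B, 0 < b) (hL : IsSchedule C L) :
    Recursive C B L ↔ Irredundant C B L :=
  recursive_iff_forall_discovered.trans <|
    forall₂_congr fun b hb => forall_discovered_iff_forall_freshSlot hL (hBpos b hb)

end Recursive

section Greedy

variable {C B : Finset ℕ} {L : Set (ℕ × ℕ)} {c t : ℕ}

/-- The periods that contribute to `gain C B L c t`. -/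
noncomputable def undiscoveredPeriods (B : Finset ℕ) (L : Set (ℕ × ℕ)) (c t : ℕ) : Finset ℕ :=
  {b ∈ B | ¬ ∃ t' < t, DiscoveredAt L c b (t % b) t'}

/-- The periods `b` for which slot `t` lies before the deadline `b * |C|` of recursive schedules. -/
def openPeriods (C B : Finset ℕ) (t : ℕ) : Finset ℕ :=
  {b ∈ B | t < b * C.card}

lemma mem_openPeriods {b : ℕ} : b ∈ openPeriods C B t ↔ b ∈ B ∧ t < b * C.card :=
  Finset.mem_filter

lemma gain_eq_sum_undiscoveredPeriods :
    gain C B L c t = ∑ b ∈ undiscoveredPeriods B L c t, weight C B b :=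
  rfl

lemma weight_nonneg (b : ℕ) : 0 ≤ weight C B b := by
  unfold weight
  positivity

lemma weight_pos (hC : C.Nonempty) {b : ℕ} (hb : b ∈ B) (hb0 : 0 < b) : 0 < weight C B b := by
  have hB : B.Nonempty := ⟨b, hb⟩
  unfold weight
  positivity

lemma undiscoveredPeriods_subset_openPeriods (hBpos : ∀ b ∈ B, 0 < b) (hL : IsSchedule C L)
    (hfresh : ∀ t' < t, ∀ b ∈ B, t' < b * C.card → FreshSlot L b t') (hc : c ∈ C) :
    undiscoveredPeriods B L c t ⊆ openPeriods C B t := by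
  intro b hb
  obtain ⟨hbB, hundisc⟩ := Finset.mem_filter.1 hb
  refine mem_openPeriods.2 ⟨hbB, ?_⟩
  by_contra! hclosed
  obtain ⟨t', hlt, hdisc⟩ := (forall_discovered_iff_forall_freshSlot hL (hBpos b hbB)).2
    (fun t' hlt => hfresh t' (hlt.trans_le hclosed) b hbB hlt) c hc (t % b)
    (Nat.mod_lt t (hBpos b hbB))
  exact hundisc ⟨t', hlt.trans_le hclosed, hdisc⟩

lemma openPeriods_subset_undiscoveredPeriods_iff (hL : IsSchedule C L) (hc : (c, t) ∈ L) :
    openPeriods C B t ⊆ undiscoveredPeriods B L c t ↔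
      ∀ b ∈ B, t < b * C.card → FreshSlot L b t := by
  simp only [Finset.subset_iff, mem_openPeriods, and_imp]
  refine forall₃_congr fun b hb _ => ?_
  rw [hL.freshSlot_iff hc, undiscoveredPeriods, Finset.mem_filter, and_iff_right hb]

lemma greedy_of_irredundant (hBpos : ∀ b ∈ B, 0 < b) (hL : IsSchedule C L)
    (h : Irredundant C B L) : Greedy C B L := by
  refine ⟨hL, ?_⟩
  rintro t ⟨c₀, hc₀, hpos⟩
  have hsub {c : ℕ} (hc : c ∈ C) : undiscoveredPeriods B L c t ⊆ openPeriods C B t :=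
    undiscoveredPeriods_subset_openPeriods hBpos hL (fun t' _ b hb => h b hb t') hc
  obtain ⟨b, hb, -⟩ := Finset.exists_ne_zero_of_sum_ne_zero hpos.ne'
  obtain ⟨hbB, hbt⟩ := mem_openPeriods.1 (hsub hc₀ hb)
  obtain ⟨c, hcL, -⟩ := h b hbB t hbt
  have hopen := (openPeriods_subset_undiscoveredPeriods_iff hL hcL).2 fun b hb => h b hb t
  exact ⟨c, hL.1 _ hcL, hcL, fun c' hc' => Finset.sum_le_sum_of_subset_of_nonneg
    ((hsub hc').trans hopen) fun b _ _ => weight_nonneg b⟩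

lemma exists_mem_forall_dvd {s : Finset ℕ} (hs : s.Nonempty) (hpos : ∀ b ∈ s, 0 < b)
    (hdvd : ∀ b ∈ s, ∀ b' ∈ s, b ∣ b' ∨ b' ∣ b) : ∃ b₀ ∈ s, ∀ b ∈ s, b₀ ∣ b := by
  obtain ⟨b₀, hb₀, hmin⟩ := Finset.exists_min_image s id hs
  refine ⟨b₀, hb₀, fun b hb => ?_⟩
  rcases hdvd b₀ hb₀ b hb with h | h
  · exact h
  · exact (le_antisymm (hmin b hb) (Nat.le_of_dvd (hpos b₀ hb₀) h)).dvd

lemma exists_channel_openPeriods_subset (hBpos : ∀ b ∈ B, 0 < b)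
    (hdvd : ∀ b ∈ B, ∀ b' ∈ B, b ∣ b' ∨ b' ∣ b) (hL : IsSchedule C L)
    (hne : (openPeriods C B t).Nonempty) :
    ∃ c ∈ C, openPeriods C B t ⊆ undiscoveredPeriods B L c t := by
  have hsub : openPeriods C B t ⊆ B := Finset.filter_subset _ _
  obtain ⟨b₀, hb₀, hb₀_dvd⟩ := exists_mem_forall_dvd hne (fun b hb => hBpos b (hsub hb))
    fun b hb b' hb' => hdvd b (hsub hb) b' (hsub hb')
  obtain ⟨c, hc, hundisc⟩ := exists_channel_not_discovered hL (mem_openPeriods.1 hb₀).2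
  refine ⟨c, hc, fun b hb => Finset.mem_filter.2 ⟨hsub hb, ?_⟩⟩
  rintro ⟨t', hlt, hmem, hmod⟩
  exact hundisc ⟨t', hlt, hmem, Nat.ModEq.of_dvd (hb₀_dvd b hb) hmod⟩

lemma Greedy.irredundant (hC : C.Nonempty) (hBpos : ∀ b ∈ B, 0 < b)
    (hdvd : ∀ b ∈ B, ∀ b' ∈ B, b ∣ b' ∨ b' ∣ b) (hg : Greedy C B L) : Irredundant C B L := by
  have ⟨hL, hmax⟩ := hg
  suffices ∀ t, ∀ b ∈ B, t < b * C.card → FreshSlot L b t from fun b hb t => this t b hb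
  intro t
  induction t using Nat.strong_induction_on with
  | _ t ih =>
    intro b hb ht
    have hbopen : b ∈ openPeriods C B t := mem_openPeriods.2 ⟨hb, ht⟩
    have hsub {c : ℕ} (hc : c ∈ C) : undiscoveredPeriods B L c t ⊆ openPeriods C B t :=
      undiscoveredPeriods_subset_openPeriods hBpos hL ih hc
    have hweight : ∀ b ∈ openPeriods C B t, 0 < weight C B b := fun b hb =>
      have hbB := (mem_openPeriods.1 hb).1
      weight_pos hC hbB (hBpos b hbB)
    obtain ⟨c, hc, hcopen⟩ := exists_channel_openPeriods_subset hBpos hdvd hL ⟨b, hbopen⟩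
    have hgain : gain C B L c t = ∑ b ∈ openPeriods C B t, weight C B b := by
      rw [gain_eq_sum_undiscoveredPeriods, (hsub hc).antisymm hcopen]
    obtain ⟨d, hd, hdL, hdmax⟩ :=
      hmax t ⟨c, hc, hgain ▸ Finset.sum_pos hweight ⟨b, hbopen⟩⟩
    have hdopen : openPeriods C B t ⊆ undiscoveredPeriods B L d t := by
      intro b' hb'
      by_contra hnot
      exact (hgain ▸ hdmax c hc).not_gt <| Finset.sum_lt_sum_of_subset (hsub hd) hb' hnot
        (hweight b' hb') fun b _ _ => weight_nonneg b
    exact (openPeriods_subset_undiscoveredPeriods_iff hL hdL).1 hdopen b hb ht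

lemma greedy_iff_irredundant (hC : C.Nonempty) (hBpos : ∀ b ∈ B, 0 < b)
    (hdvd : ∀ b ∈ B, ∀ b' ∈ B, b ∣ b' ∨ b' ∣ b) (hL : IsSchedule C L) :
    Greedy C B L ↔ Irredundant C B L :=
  ⟨Greedy.irredundant hC hBpos hdvd, greedy_of_irredundant hBpos hL⟩

end Greedy

section Optimality

variable {C B : Finset ℕ} {L L' : Set (ℕ × ℕ)}

lemma mem_KBC {κ : ℕ × ℕ × ℕ} : κ ∈ KBC C B ↔ κ.1 ∈ C ∧ κ.2.1 ∈ B ∧ κ.2.2 < κ.2.1 := by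
  simp only [KBC, Finset.mem_filter, Finset.mem_product, Finset.mem_range]
  refine ⟨fun ⟨⟨hc, hb, _⟩, hδ⟩ => ⟨hc, hb, hδ⟩, fun ⟨hc, hb, hδ⟩ => ⟨⟨hc, hb, ?_⟩, hδ⟩⟩
  exact hδ.trans_le (Finset.le_sup (f := id) hb)

lemma sum_KBC {M : Type*} [AddCommMonoid M] (f : ℕ × ℕ × ℕ → M) :
    ∑ κ ∈ KBC C B, f κ = ∑ b ∈ B, ∑ p ∈ C ×ˢ Finset.range b, f (p.1, b, p.2) := by
  rw [Finset.sum_sigma']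
  refine Finset.sum_nbij' (fun κ => ⟨κ.2.1, κ.1, κ.2.2⟩) (fun x => (x.2.1, x.1, x.2.2))
    ?_ ?_ (fun _ _ => rfl) (fun _ _ => rfl) (fun _ _ => rfl)
  · simp +contextual [mem_KBC]
  · simp +contextual [mem_KBC]

lemma discSum_eq_sum_card (C B : Finset ℕ) (L : Set (ℕ × ℕ)) (t : ℕ) :
    discSum C B L t = ∑ b ∈ B, (discoveredBefore C L b (t + 1)).card * weight C B b := by
  rw [discSum, Finset.sum_filter, sum_KBC]
  refine Finset.sum_congr rfl fun b _ => ?_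
  simp only [← Finset.sum_filter, Finset.sum_const, nsmul_eq_mul, discoveredBefore,
    Nat.lt_succ_iff]

lemma Irredundant.discSum_le (hBpos : ∀ b ∈ B, 0 < b) (hL : IsSchedule C L)
    (h : Irredundant C B L) (hL' : IsSchedule C L') (t : ℕ) :
    discSum C B L' t ≤ discSum C B L t := by
  rw [discSum_eq_sum_card, discSum_eq_sum_card]
  refine Finset.sum_le_sum fun b hb => mul_le_mul_of_nonneg_right ?_ (weight_nonneg b)
  exact_mod_cast (card_discoveredBefore_le hL' (hBpos b hb) (t + 1)).trans
    (min_le_card_discoveredBefore hL (hBpos b hb) (h b hb) (t + 1))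

lemma discSum_eq_sum_ite (h : Complete C B L) (t : ℕ) :
    discSum C B L t = ∑ κ ∈ KBC C B,
      weight C B κ.2.1 * if discTime L κ.1 κ.2.1 κ.2.2 ≤ t then 1 else 0 := by
  rw [discSum, Finset.sum_filter]
  refine Finset.sum_congr rfl fun κ hκ => ?_
  obtain ⟨hc, hb, hδ⟩ := mem_KBC.1 hκ
  simp only [exists_le_discoveredAt_iff (h _ hc _ hb _ hδ), mul_ite, mul_one, mul_zero]

lemma add_sum_range_ite_le {T N : ℕ} (h : T ≤ N) :
    (T : ℝ) + ∑ t ∈ Finset.range N, (if T ≤ t then 1 else 0) = N := by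
  have hfilter : {t ∈ Finset.range N | T ≤ t} = Finset.Ico T N := by
    ext t
    simp only [Finset.mem_filter, Finset.mem_range, Finset.mem_Ico, and_comm]
  rw [Finset.sum_boole, hfilter, Nat.card_Ico, Nat.cast_sub h, add_sub_cancel]

lemma MDT_add_sum_discSum (h : Complete C B L) {N : ℕ}
    (hN : ∀ κ ∈ KBC C B, discTime L κ.1 κ.2.1 κ.2.2 ≤ N) :
    MDT C B L + ∑ t ∈ Finset.range N, discSum C B L t = ∑ κ ∈ KBC C B, weight C B κ.2.1 * N := by
  simp only [discSum_eq_sum_ite h]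
  rw [Finset.sum_comm, MDT, ← Finset.sum_add_distrib]
  refine Finset.sum_congr rfl fun κ hκ => ?_
  rw [← Finset.mul_sum, ← mul_add, add_sum_range_ite_le (hN κ hκ)]

lemma MDT_le_of_discSum_le (h : Complete C B L) (h' : Complete C B L')
    (hle : ∀ t, discSum C B L' t ≤ discSum C B L t) : MDT C B L ≤ MDT C B L' := by
  let N := (KBC C B).sup fun κ =>
    max (discTime L κ.1 κ.2.1 κ.2.2) (discTime L' κ.1 κ.2.1 κ.2.2)
  have hN : ∀ κ ∈ KBC C B, max (discTime L κ.1 κ.2.1 κ.2.2) (discTime L' κ.1 κ.2.1 κ.2.2) ≤ N :=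
    Finset.sup_le_iff.1 le_rfl
  have hsum := MDT_add_sum_discSum h fun κ hκ => (le_max_left _ _).trans (hN κ hκ)
  have hsum' := MDT_add_sum_discSum h' fun κ hκ => (le_max_right _ _).trans (hN κ hκ)
  have hcurve : ∑ t ∈ Finset.range N, discSum C B L' t ≤ ∑ t ∈ Finset.range N, discSum C B L t :=
    Finset.sum_le_sum fun t _ => hle t
  linarith

end Optimality

/-- for `B ∈ 𝔽₃`, a schedule is greedy iff it is recursive; consequently
every greedy schedule is complete, WDT-optimal, MDT-optimal and NDoT-optimal. -/
theorem stmt11 (C B : Finset ℕ) (hC : C.Nonempty) (hB : B.Nonempty)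
    (hBpos : ∀ b ∈ B, 0 < b)
    (hF3 : ∀ b ∈ B, ∀ b' ∈ B, b ∣ b' ∨ b' ∣ b)
    (L : Set (ℕ × ℕ)) (hL : IsSchedule C L) :
    (Greedy C B L ↔ Recursive C B L) ∧
    (Greedy C B L →
      Complete C B L ∧
      (∀ c ∈ C, ∀ b ∈ B, ∀ δ < b,
        discTime L c b δ ≤ B.max' hB * C.card - 1) ∧
      (∀ L' : Set (ℕ × ℕ), IsSchedule C L' → Complete C B L' →
        MDT C B L ≤ MDT C B L') ∧
      (∀ L' : Set (ℕ × ℕ), IsSchedule C L' →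
        ∀ t : ℕ, discSum C B L' t ≤ discSum C B L t)) := by
  have hgreedy : Greedy C B L ↔ Irredundant C B L := greedy_iff_irredundant hC hBpos hF3 hL
  have hrecursive : Recursive C B L ↔ Irredundant C B L := recursive_iff_irredundant hBpos hL
  refine ⟨hgreedy.trans hrecursive.symm, fun hg => ?_⟩
  have hirr : Irredundant C B L := hgreedy.1 hg
  obtain ⟨hcomplete, htime⟩ : Recursive C B L := hrecursive.2 hirr
  have hNDoT (L' : Set (ℕ × ℕ)) (hL' : IsSchedule C L') (t : ℕ) :
      discSum C B L' t ≤ discSum C B L t := hirr.discSum_le hBpos hL hL' t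
  refine ⟨hcomplete, fun c hc b hb δ hδ => ?_, fun L' hL' hcomplete' => ?_, hNDoT⟩
  · calc discTime L c b δ ≤ b * C.card - 1 := htime c hc b hb δ hδ
      _ ≤ B.max' hB * C.card - 1 := by gcongr; exact B.le_max' b hb
  · exact MDT_le_of_discSum_le hcomplete hcomplete' (hNDoT L' hL')
end
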